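/- Fix a real number c with 0 ≤ c < 1 and set ξ∨ = (c(1−c²) + (1−c)²√(3+4c+c²))/(2√(1−c²)) and η∨ = (1/3)(8 − 7c + 2c³ − 2(1−c)²√(3+4c+c²)). Then ψ(t, ξ∨, η∨) ≤ 0 for all t ∈ [−1,1], the maximum of |ψ(·, ξ∨, η∨)| over [−1,1] equals (27/1024)(1−c)⁴((2+c) − √(3+4c+c²))², this value is at most 27(2−√3)²/1024, and for every pair (ξ, η) with ξ > 0 such that ψ(t, ξ, η) ≤ 0 for all t ∈ [−1,1], sup over t ∈ [−1,1] of |ψ(t, ξ, η)| is at least (27/1024)(1−c)⁴((2+c) − √(3+4c+c²))²; i.e., (ξ∨, η∨) induces the optimal inner quartic G¹ approximant. -/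

import Mathlib

/-- Simplified radial error of the quartic G¹ Bézier approximant of the unit circular arc. -/
noncomputable def psiQ (c t ξ η : ℝ) : ℝ :=
  (t^2 - 1)^2 *
    ((1/64)*(3*η - 4*Real.sqrt (1 - c^2)*ξ - 3*c)^2*t^4
      + (1/64)*(32*c^2*ξ^2 + 32*ξ^2 - 64*c*Real.sqrt (1 - c^2)*ξ
          - 18*η^2 + 36*c*η - 34*c^2 + 16)*t^2
      + (1/64)*((3*η + 4*Real.sqrt (1 - c^2)*ξ + 5*c)^2 - 64))

/-- Sup over `t ∈ [−1,1]` of `|f t|`. -/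
noncomputable def errSup (f : ℝ → ℝ) : ℝ :=
  sSup ((fun t => |f t|) '' Set.Icc (-1 : ℝ) 1)

/-!
Both `ψ` and the constraint `ψ ≤ 0` become transparent in Bernstein form: with `x = t²`,
`ψ = (1 - x)² ((m² - 1)(1 - x) + e x - d² x (1 - x))`, where `m` and `d` are the constant and the
leading coefficient of the abscissa of the approximant and `e` governs the contact at the end
points. Hence `ψ ≤ 0` exactly when `m² ≤ 1` and `e ≤ 0`. At `(ξ∨, η∨)` both constraints are active,
`m = 1` and `e = 0`, so that `|ψ| = d² x (1 - x)³` has maximum `27 d² / 256`, at `t = 1/2`; the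
value `L` of `d` there is the smaller root of a quadratic equation. For any inner approximant the
value at `t = 1/2` gives `max |ψ| ≥ (27/256) (d² + 4 (1 - m²))`, so it remains to exclude
`|d| < L` with `m²` too close to `1`. Since `e` is a convex function of `(ξ, η)`, its tangent line
at the optimum yields `(1 - c) (L - d) ≤ (1 + c) (1 - m)`, which settles `m ≥ 0`; for `m ≤ 0` the
constraint `e ≤ 0` yields `L + d ≤ 1 + m`.
-/

/-- The abscissa of the approximant at `t = 0`, the constant coefficient of its first coordinate. -/
noncomputable def midX (c ξ η : ℝ) : ℝ :=
  (3 * η + 4 * √(1 - c ^ 2) * ξ + 5 * c) / 8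

/-- The coefficient of `t⁴` in the first coordinate of the approximant. -/
noncomputable def leadX (c ξ η : ℝ) : ℝ :=
  (3 * η - 4 * √(1 - c ^ 2) * ξ - 3 * c) / 8

/-- The leading radial error at the end points: the limit of `ψ / (t² - 1)²` as `t → ±1`. -/
noncomputable def endError (c ξ η : ℝ) : ℝ :=
  ξ ^ 2 + 3 / 4 * (c * η - 1)

/-- The value of `leadX` at the optimal parameters: the smaller root of
`q² - (2 + c) (1 - c)² q + (1 - c)⁴ / 4`. -/
noncomputable def optLead (c : ℝ) : ℝ :=
  (1 - c) ^ 2 / 2 * (2 + c - √(3 + 4 * c + c ^ 2))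

/-- The optimal tangent length `ξ∨`. -/
noncomputable def optXi (c : ℝ) : ℝ :=
  (c * (1 - c ^ 2) + (1 - c) ^ 2 * √(3 + 4 * c + c ^ 2)) / (2 * √(1 - c ^ 2))

/-- The abscissa `η∨` of the optimal middle control point. -/
noncomputable def optEta (c : ℝ) : ℝ :=
  1 / 3 * (8 - 7 * c + 2 * c ^ 3 - 2 * (1 - c) ^ 2 * √(3 + 4 * c + c ^ 2))

lemma le_errSup {f : ℝ → ℝ} (hf : ContinuousOn f (Set.Icc (-1) 1)) {t : ℝ}
    (ht : t ∈ Set.Icc (-1) 1) : |f t| ≤ errSup f :=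
  le_csSup (isCompact_Icc.bddAbove_image hf.abs) (Set.mem_image_of_mem _ ht)

lemma errSup_eq_of_isMaxOn {f : ℝ → ℝ} {t₀ : ℝ} (ht₀ : t₀ ∈ Set.Icc (-1) 1)
    (hmax : IsMaxOn (fun t ↦ |f t|) (Set.Icc (-1) 1) t₀) : errSup f = |f t₀| :=
  IsGreatest.csSup_eq ⟨Set.mem_image_of_mem _ ht₀, Set.forall_mem_image.2 hmax⟩

lemma mul_one_sub_pow_three_le (x : ℝ) : x * (1 - x) ^ 3 ≤ 27 / 256 := by
  have gap_eq : 27 / 256 - x * (1 - x) ^ 3 = (x - 1 / 4) ^ 2 * ((x - 5 / 4) ^ 2 + 1 / 8) := by ring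
  rw [← sub_nonneg, gap_eq]
  positivity

lemma continuous_psiQ (c ξ η : ℝ) : Continuous fun t ↦ psiQ c t ξ η := by
  unfold psiQ
  fun_prop

lemma psiQ_eq_bernstein {c : ℝ} (hc : c ^ 2 ≤ 1) (t ξ η : ℝ) :
    psiQ c t ξ η = (1 - t ^ 2) ^ 2 * ((midX c ξ η ^ 2 - 1) * (1 - t ^ 2) + endError c ξ η * t ^ 2
      - leadX c ξ η ^ 2 * (t ^ 2 * (1 - t ^ 2))) := by
  have sqrt_sq : √(1 - c ^ 2) ^ 2 = 1 - c ^ 2 := Real.sq_sqrt (sub_nonneg.2 hc)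
  unfold psiQ midX leadX endError
  linear_combination (1 - t ^ 2) ^ 2 * t ^ 2 * ξ ^ 2 / 2 * sqrt_sq

lemma psiQ_nonpos_iff {c : ℝ} (hc : c ^ 2 ≤ 1) (ξ η : ℝ) :
    (∀ t ∈ Set.Icc (-1 : ℝ) 1, psiQ c t ξ η ≤ 0) ↔ midX c ξ η ^ 2 ≤ 1 ∧ endError c ξ η ≤ 0 := by
  simp only [psiQ_eq_bernstein hc]
  constructor
  · intro hψ
    refine ⟨by simpa using hψ 0 (by norm_num), ?_⟩
    have factor_nonpos : ∀ t ∈ Set.Ico (0 : ℝ) 1, (midX c ξ η ^ 2 - 1) * (1 - t ^ 2)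
        + endError c ξ η * t ^ 2 - leadX c ξ η ^ 2 * (t ^ 2 * (1 - t ^ 2)) ≤ 0 := by
      rintro t ⟨ht₀, ht₁⟩
      have one_sub_sq_pos : 0 < 1 - t ^ 2 := by nlinarith
      exact nonpos_of_mul_nonpos_right (hψ t ⟨by linarith, ht₁.le⟩) (by positivity)
    have one_mem : (1 : ℝ) ∈ closure (Set.Ico 0 1) := by
      rw [closure_Ico zero_ne_one]
      exact Set.right_mem_Icc.2 zero_le_one
    simpa using le_on_closure factor_nonpos (by fun_prop) (by fun_prop) one_mem
  · rintro ⟨hmid, hend⟩ t ht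
    have ht' : 0 ≤ 1 - t ^ 2 := sub_nonneg.2 ((sq_le_one_iff_abs_le_one t).2 (abs_le.2 ht))
    refine mul_nonpos_of_nonneg_of_nonpos (by positivity) ?_
    have mid_term := mul_nonneg (sub_nonneg.2 hmid) ht'
    have end_term := mul_nonpos_of_nonpos_of_nonneg hend (sq_nonneg t)
    have lead_term : 0 ≤ leadX c ξ η ^ 2 * (t ^ 2 * (1 - t ^ 2)) := by positivity
    linarith

lemma errSup_psiQ_of_active {c ξ η : ℝ} (hc : c ^ 2 ≤ 1) (hmid : midX c ξ η = 1)
    (hend : endError c ξ η = 0) :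
    errSup (fun t ↦ psiQ c t ξ η) = 27 / 256 * leadX c ξ η ^ 2 := by
  have abs_psiQ : ∀ t ∈ Set.Icc (-1 : ℝ) 1,
      |psiQ c t ξ η| = leadX c ξ η ^ 2 * (t ^ 2 * (1 - t ^ 2) ^ 3) := by
    intro t ht
    rw [abs_of_nonpos ((psiQ_nonpos_iff hc ξ η).2 ⟨by simp [hmid], hend.le⟩ t ht),
      psiQ_eq_bernstein hc, hmid, hend]
    ring
  have half_mem : (1 / 2 : ℝ) ∈ Set.Icc (-1) 1 := by norm_num
  have max_at_half : IsMaxOn (fun t ↦ |psiQ c t ξ η|) (Set.Icc (-1) 1) (1 / 2) := by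
    intro t ht
    simp only [Set.mem_ofPred_eq, abs_psiQ t ht, abs_psiQ _ half_mem]
    have value_at_half : (27 / 256 : ℝ) = (1 / 2) ^ 2 * (1 - (1 / 2) ^ 2) ^ 3 := by norm_num
    exact mul_le_mul_of_nonneg_left
      ((mul_one_sub_pow_three_le (t ^ 2)).trans_eq value_at_half) (sq_nonneg _)
  rw [errSup_eq_of_isMaxOn half_mem max_at_half, abs_psiQ _ half_mem]
  ring

lemma le_errSup_psiQ {c ξ η : ℝ} (hc : c ^ 2 ≤ 1) (hend : endError c ξ η ≤ 0) :
    27 / 256 * (leadX c ξ η ^ 2 + 4 * (1 - midX c ξ η ^ 2)) ≤ errSup fun t ↦ psiQ c t ξ η := by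
  refine le_trans ?_ (le_errSup (continuous_psiQ c ξ η).continuousOn
    (show (1 / 2 : ℝ) ∈ Set.Icc (-1) 1 by norm_num))
  refine le_trans ?_ (neg_le_abs _)
  rw [psiQ_eq_bernstein hc]
  linarith

lemma two_add_sub_sqrt_eq_inv {c : ℝ} (hc : -1 ≤ c) :
    2 + c - √(3 + 4 * c + c ^ 2) = (2 + c + √(3 + 4 * c + c ^ 2))⁻¹ := by
  have sqrt_sq : √(3 + 4 * c + c ^ 2) ^ 2 = 3 + 4 * c + c ^ 2 := Real.sq_sqrt (by nlinarith)
  refine eq_inv_of_mul_eq_one_left ?_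
  linear_combination -sqrt_sq

lemma optLead_nonneg {c : ℝ} (hc : -1 ≤ c) : 0 ≤ optLead c := by
  have : 0 < 2 + c := by linarith
  rw [optLead, two_add_sub_sqrt_eq_inv hc]
  positivity

lemma optLead_le_mul_sq {c : ℝ} (hc : 0 ≤ c) : optLead c ≤ (2 - √3) / 2 * (1 - c) ^ 2 := by
  have gap_le : 2 + c - √(3 + 4 * c + c ^ 2) ≤ 2 + 0 - √(3 + 4 * 0 + 0 ^ 2) := by
    rw [two_add_sub_sqrt_eq_inv (by linarith), two_add_sub_sqrt_eq_inv (by norm_num)]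
    gcongr
  calc optLead c ≤ (1 - c) ^ 2 / 2 * (2 + 0 - √(3 + 4 * 0 + 0 ^ 2)) :=
        mul_le_mul_of_nonneg_left gap_le (by positivity)
    _ = (2 - √3) / 2 * (1 - c) ^ 2 := by ring_nf

lemma optLead_le {c : ℝ} (hc₀ : 0 ≤ c) (hc₁ : c ≤ 1) : optLead c ≤ (2 - √3) / 2 := by
  have sqrt_three_le : √3 ≤ 2 := Real.sqrt_le_iff.2 (by norm_num)
  exact (optLead_le_mul_sq hc₀).trans
    (mul_le_of_le_one_right (by linarith) (pow_le_one₀ (by linarith) (by linarith)))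

lemma optLead_le_quarter_mul_sq {c : ℝ} (hc : 0 ≤ c) : optLead c ≤ 1 / 4 * (1 - c) ^ 2 := by
  have le_sqrt_three : 3 / 2 ≤ √3 := Real.le_sqrt_of_sq_le (by norm_num)
  refine (optLead_le_mul_sq hc).trans ?_
  exact mul_le_mul_of_nonneg_right (by linarith) (sq_nonneg _)

-- As a function of `leadX + 1 - midX`, the right-hand side is expanded around its root `optLead c`
-- on the line `midX = 1`.
lemma one_sub_sq_mul_endError {c : ℝ} (hc : c ^ 2 ≤ 1) (ξ η : ℝ) :
    (1 - c ^ 2) * endError c ξ η = (leadX c ξ η + 1 - midX c ξ η - optLead c) ^ 2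
      - (1 - c) ^ 2 * √(3 + 4 * c + c ^ 2) * (leadX c ξ η + 1 - midX c ξ η - optLead c)
      - 2 * c * (1 - c ^ 2) * (1 - midX c ξ η) := by
  have sqrt_sq : √(1 - c ^ 2) ^ 2 = 1 - c ^ 2 := Real.sq_sqrt (sub_nonneg.2 hc)
  have sqrt_sq' : √(3 + 4 * c + c ^ 2) ^ 2 = 3 + 4 * c + c ^ 2 :=
    Real.sq_sqrt (by nlinarith [(abs_le.1 ((sq_le_one_iff_abs_le_one c).1 hc)).1])
  unfold endError leadX midX optLead
  linear_combination (-ξ ^ 2) * sqrt_sq + (1 - c) ^ 4 / 4 * sqrt_sq'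

lemma sqrt_mul_optXi {c : ℝ} (hc : c ^ 2 < 1) : √(1 - c ^ 2) * optXi c
    = (c * (1 - c ^ 2) + (1 - c) ^ 2 * √(3 + 4 * c + c ^ 2)) / 2 := by
  have : 0 < √(1 - c ^ 2) := Real.sqrt_pos.2 (sub_pos.2 hc)
  unfold optXi
  field_simp

lemma midX_opt {c : ℝ} (hc : c ^ 2 < 1) : midX c (optXi c) (optEta c) = 1 := by
  rw [midX, mul_assoc, sqrt_mul_optXi hc, optEta]
  ring

lemma leadX_opt {c : ℝ} (hc : c ^ 2 < 1) : leadX c (optXi c) (optEta c) = optLead c := by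
  rw [leadX, mul_assoc, sqrt_mul_optXi hc, optEta, optLead]
  ring

lemma endError_opt {c : ℝ} (hc : c ^ 2 < 1) : endError c (optXi c) (optEta c) = 0 := by
  have key := one_sub_sq_mul_endError hc.le (optXi c) (optEta c)
  rw [midX_opt hc, leadX_opt hc] at key
  refine (mul_eq_zero.1 (key.trans ?_)).resolve_left (sub_pos.2 hc).ne'
  ring

lemma one_sub_mul_optLead_sub_leadX_le {c ξ η : ℝ} (hc₀ : 0 ≤ c) (hc₁ : c < 1)
    (hmid : midX c ξ η ≤ 1) (hend : endError c ξ η ≤ 0) :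
    (1 - c) * (optLead c - leadX c ξ η) ≤ (1 + c) * (1 - midX c ξ η) := by
  have hc : c ^ 2 ≤ 1 := by nlinarith
  have key := one_sub_sq_mul_endError hc ξ η
  have hp : 0 ≤ 1 - midX c ξ η := sub_nonneg.2 hmid
  set p := 1 - midX c ξ η with p_def
  set r := √(3 + 4 * c + c ^ 2)
  set q := leadX c ξ η + 1 - midX c ξ η with q_def
  have hr : 1 + c ≤ r := Real.le_sqrt_of_sq_le (by nlinarith)
  have tangent : (1 - c) * ((1 - c) * r * (optLead c - q)) ≤ (1 - c) * (2 * c * (1 + c) * p) := by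
    have scaled_end := mul_nonpos_of_nonneg_of_nonpos (sub_nonneg.2 hc) hend
    linarith [sq_nonneg (q - optLead c)]
  have slope : r * ((1 - c) * (optLead c - q)) ≤ r * (2 * c * p) :=
    calc r * ((1 - c) * (optLead c - q)) = (1 - c) * r * (optLead c - q) := by ring
      _ ≤ 2 * c * (1 + c) * p := le_of_mul_le_mul_left tangent (by linarith)
      _ = (1 + c) * (2 * c * p) := by ring
      _ ≤ r * (2 * c * p) := by gcongr
  have bound := le_of_mul_le_mul_left slope (by linarith)
  linarith [p_def, q_def]

lemma optLead_add_leadX_le {c ξ η : ℝ} (hc₀ : 0 ≤ c) (hc₁ : c ≤ 1) (hmid : -1 ≤ midX c ξ η)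
    (hlead : -optLead c ≤ leadX c ξ η) (hend : endError c ξ η ≤ 0) :
    optLead c + leadX c ξ η ≤ 1 + midX c ξ η := by
  have hc : 0 ≤ 1 - c ^ 2 := by nlinarith
  have sqrt_sq : √(1 - c ^ 2) ^ 2 = 1 - c ^ 2 := Real.sq_sqrt hc
  have sqrt_three_sq : √3 ^ 2 = 3 := Real.sq_sqrt (by norm_num)
  have le_sqrt_three : 3 / 2 ≤ √3 := Real.le_sqrt_of_sq_le (by norm_num)
  have lead_le := optLead_le hc₀ hc₁
  by_contra! far
  have eta_ge : -(5 + c) / 3 ≤ η := by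
    unfold midX at hmid
    unfold leadX at hlead
    linarith
  have xi_neg : √3 / 2 + c < -(√(1 - c ^ 2) * ξ) := by
    unfold midX leadX at far
    linarith
  have xi_sq_gt : 3 / 4 + √3 * c + c ^ 2 < (1 - c ^ 2) * ξ ^ 2 := by
    have sq_lt := pow_lt_pow_left₀ xi_neg (by positivity) two_ne_zero
    rw [neg_sq, mul_pow, sqrt_sq] at sq_lt
    linarith
  have eta_term_le : (1 - c ^ 2) * (1 - c * η) ≤ 1 + 5 / 3 * c := by
    have factor_le : 1 - c * η ≤ 1 + 5 / 3 * c + c ^ 2 / 3 := by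
      linarith [mul_le_mul_of_nonneg_left eta_ge hc₀]
    have prod_le := mul_le_mul_of_nonneg_left factor_le hc
    linarith [sq_nonneg c, pow_nonneg hc₀ 3, pow_nonneg hc₀ 4]
  have five_fourths_le : 5 / 4 * c ≤ √3 * c := by gcongr; linarith
  have scaled_end := mul_nonpos_of_nonneg_of_nonpos hc hend
  unfold endError at scaled_end
  linarith [sq_nonneg c]

lemma optLead_sq_le {c ξ η : ℝ} (hc₀ : 0 ≤ c) (hc₁ : c < 1) (hmid : midX c ξ η ^ 2 ≤ 1)
    (hend : endError c ξ η ≤ 0) :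
    optLead c ^ 2 ≤ leadX c ξ η ^ 2 + 4 * (1 - midX c ξ η ^ 2) := by
  obtain ⟨hmid₀, hmid₁⟩ := abs_le.1 ((sq_le_one_iff_abs_le_one _).1 hmid)
  have right := one_sub_mul_optLead_sub_leadX_le hc₀ hc₁ hmid₁ hend
  have left := optLead_add_leadX_le hc₀ hc₁.le hmid₀ (hend := hend)
  have lead_nonneg : 0 ≤ optLead c := optLead_nonneg (by linarith)
  have lead_le := optLead_le_quarter_mul_sq hc₀
  set m := midX c ξ η
  set d := leadX c ξ η
  set L := optLead c
  rcases le_or_gt (L ^ 2) (d ^ 2) with large | small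
  · linarith
  obtain ⟨hd₀, hd₁⟩ := abs_lt_of_sq_lt_sq' small lead_nonneg
  rcases le_total 0 m with hm | hm
  · have drop_le : (L - d) * (L + d) ≤ 1 - m :=
      calc (L - d) * (L + d) ≤ (L - d) * (2 * (1 / 4 * (1 - c) ^ 2)) :=
            mul_le_mul_of_nonneg_left (by linarith) (by linarith)
        _ = (1 - c) / 2 * ((1 - c) * (L - d)) := by ring
        _ ≤ (1 - c) / 2 * ((1 + c) * (1 - m)) :=
            mul_le_mul_of_nonneg_left right (by linarith)
        _ = (1 - c ^ 2) / 2 * (1 - m) := by ring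
        _ ≤ 1 - m := mul_le_of_le_one_left (by linarith) (by nlinarith)
    linarith [mul_nonneg (sub_nonneg.2 hmid₁) hm]
  · have quarter_mul_le : 1 / 4 * (1 - c) ^ 2 ≤ (1 / 4 : ℝ) := by nlinarith
    have drop_le : (L + d) * (L - d) ≤ (1 + m) * 1 :=
      mul_le_mul (left hd₀.le) (by linarith) (by linarith) (by linarith)
    linarith [mul_nonneg_of_nonpos_of_nonpos hm (by linarith : -(1 + m) ≤ 0)]

theorem stmt_16_general (c : ℝ) (hc0 : 0 ≤ c) (hc1 : c < 1) (ξv ηv : ℝ)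
    (hξv : ξv = (c * (1 - c ^ 2) + (1 - c) ^ 2 * √(3 + 4 * c + c ^ 2)) / (2 * √(1 - c ^ 2)))
    (hηv : ηv = 1 / 3 * (8 - 7 * c + 2 * c ^ 3 - 2 * (1 - c) ^ 2 * √(3 + 4 * c + c ^ 2))) :
    (∀ t ∈ Set.Icc (-1 : ℝ) 1, psiQ c t ξv ηv ≤ 0) ∧
    errSup (fun t ↦ psiQ c t ξv ηv)
      = 27 / 1024 * (1 - c) ^ 4 * (2 + c - √(3 + 4 * c + c ^ 2)) ^ 2 ∧
    27 / 1024 * (1 - c) ^ 4 * (2 + c - √(3 + 4 * c + c ^ 2)) ^ 2 ≤ 27 * (2 - √3) ^ 2 / 1024 ∧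
    ∀ ξ η : ℝ, (∀ t ∈ Set.Icc (-1 : ℝ) 1, psiQ c t ξ η ≤ 0) →
      27 / 1024 * (1 - c) ^ 4 * (2 + c - √(3 + 4 * c + c ^ 2)) ^ 2
        ≤ errSup fun t ↦ psiQ c t ξ η := by
  have hc : c ^ 2 < 1 := by nlinarith
  obtain rfl : ξv = optXi c := hξv
  obtain rfl : ηv = optEta c := hηv
  have error_eq : 27 / 1024 * (1 - c) ^ 4 * (2 + c - √(3 + 4 * c + c ^ 2)) ^ 2
      = 27 / 256 * optLead c ^ 2 := by
    rw [optLead]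
    ring
  rw [error_eq]
  refine ⟨?_, ?_, ?_, ?_⟩
  · exact (psiQ_nonpos_iff hc.le _ _).2 ⟨by simp [midX_opt hc], (endError_opt hc).le⟩
  · rw [errSup_psiQ_of_active hc.le (midX_opt hc) (endError_opt hc), leadX_opt hc]
  · have sq_le := pow_le_pow_left₀ (optLead_nonneg (by linarith)) (optLead_le hc0 hc1.le) 2
    linarith
  · intro ξ η hψ
    obtain ⟨hmid, hend⟩ := (psiQ_nonpos_iff hc.le ξ η).1 hψ
    refine le_trans ?_ (le_errSup_psiQ hc.le hend)
    gcongr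
    exact optLead_sq_le hc0 hc1 hmid hend

/-- `(ξ∨, η∨)` induces the optimal inner quartic G¹ approximant, with error
`(27/1024)(1−c)⁴((2+c) − √(3+4c+c²))² ≤ 27(2−√3)²/1024`. -/
theorem stmt_16 (c : ℝ) (hc0 : 0 ≤ c) (hc1 : c < 1)
    (ξv ηv : ℝ)
    (hξv : ξv = (c*(1 - c^2) + (1 - c)^2*Real.sqrt (3 + 4*c + c^2))/(2*Real.sqrt (1 - c^2)))
    (hηv : ηv = (1/3)*(8 - 7*c + 2*c^3 - 2*(1 - c)^2*Real.sqrt (3 + 4*c + c^2))) :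
    (∀ t ∈ Set.Icc (-1 : ℝ) 1, psiQ c t ξv ηv ≤ 0) ∧
    errSup (fun t => psiQ c t ξv ηv)
      = (27/1024)*(1 - c)^4*((2 + c) - Real.sqrt (3 + 4*c + c^2))^2 ∧
    (27/1024)*(1 - c)^4*((2 + c) - Real.sqrt (3 + 4*c + c^2))^2
      ≤ 27*(2 - Real.sqrt 3)^2/1024 ∧
    ∀ ξ η : ℝ, 0 < ξ → (∀ t ∈ Set.Icc (-1 : ℝ) 1, psiQ c t ξ η ≤ 0) →
      (27/1024)*(1 - c)^4*((2 + c) - Real.sqrt (3 + 4*c + c^2))^2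
        ≤ errSup (fun t => psiQ c t ξ η) := by
  obtain ⟨hψ, hmax, hle, hopt⟩ := stmt_16_general c hc0 hc1 ξv ηv hξv hηv
  exact ⟨hψ, hmax, hle, fun ξ η _ ↦ hopt ξ η⟩
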